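/- arXiv:1701.07422 — 7 statements merged into one kernel-verified Lean document; each statement's English description precedes it below -/
import Mathlib

section
/- Let n ≥ 2, let k₁, k₂ be real constants, and let x, y ∈ ℝⁿ. Set e = x − y, let μ_e = (1/n)·Σᵢ eᵢ be its mean, and let 𝟙 ∈ ℝⁿ be the all-ones vector. Then k₁·μ_e² + (k₂/(n−1))·‖e − μ_e·𝟙‖₂² = eᵀ W e, where W = θ₁·I + θ₂·𝟙𝟙ᵀ with θ₁ = k₂/(n−1) and θ₂ = k₁/n² − k₂/(n(n−1)). -/
/-! Both sides are functions of `S = ∑ eᵢ` and `Q = ∑ eᵢ²` alone: the centred sum of squares is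
`Q - S² / n`, while `eᵀ W e = θ₁ Q + θ₂ S²` because `eᵀ 𝟙𝟙ᵀ e = S²`. Comparing the coefficients of
`Q` and `S²` gives the identity. -/

open Matrix BigOperators

theorem stmt_0 (n : ℕ) (hn : 2 ≤ n) (k₁ k₂ : ℝ) (x y : Fin n → ℝ)
    (e : Fin n → ℝ) (he : e = x - y)
    (μ : ℝ) (hμ : μ = (∑ i, e i) / n)
    (W : Matrix (Fin n) (Fin n) ℝ)
    (hW : W = (k₂ / ((n : ℝ) - 1)) • (1 : Matrix (Fin n) (Fin n) ℝ) +
        (k₁ / (n : ℝ) ^ 2 - k₂ / ((n : ℝ) * ((n : ℝ) - 1))) •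
          Matrix.of (fun _ _ => (1 : ℝ))) :
    k₁ * μ ^ 2 + (k₂ / ((n : ℝ) - 1)) * (∑ i, (e i - μ) ^ 2) =
      e ⬝ᵥ W.mulVec e := by
  have hn0 : (n : ℝ) ≠ 0 := by
    have : n ≠ 0 := by omega
    exact_mod_cast this
  have hn1 : (n : ℝ) - 1 ≠ 0 := by
    have : (2 : ℝ) ≤ n := by exact_mod_cast hn
    linarith
  have hcentred : ∑ i, (e i - μ) ^ 2 = ∑ i, e i ^ 2 - (∑ i, e i) ^ 2 / n := by
    have hexpand : ∑ i, (e i - μ) ^ 2 = ∑ i, e i ^ 2 - 2 * μ * ∑ i, e i + n * μ ^ 2 := by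
      simp only [sub_sq, Finset.sum_add_distrib, Finset.sum_sub_distrib, Finset.mul_sum,
        Finset.sum_const, Finset.card_univ, Fintype.card_fin, nsmul_eq_mul]
      congr 2
      exact Finset.sum_congr rfl fun i _ => by ring
    rw [hexpand, hμ]
    field_simp
    ring
  have hones : (Matrix.of (fun _ _ => (1 : ℝ)) : Matrix (Fin n) (Fin n) ℝ).mulVec e =
      fun _ => ∑ i, e i := by
    ext j
    simp [Matrix.mulVec, dotProduct]
  have hquad : e ⬝ᵥ W.mulVec e = k₂ / ((n : ℝ) - 1) * ∑ i, e i ^ 2 +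
      (k₁ / (n : ℝ) ^ 2 - k₂ / ((n : ℝ) * ((n : ℝ) - 1))) * (∑ i, e i) ^ 2 := by
    rw [hW, Matrix.add_mulVec, Matrix.smul_mulVec, Matrix.smul_mulVec, Matrix.one_mulVec, hones,
      dotProduct_add, dotProduct_smul, dotProduct_smul]
    simp only [dotProduct, smul_eq_mul, ← Finset.sum_mul, ← pow_two]
  rw [hquad, hcentred, hμ]
  field_simp
  ring
end

section
/- Let n ≥ 2 and k₁, k₂ > 0, and let W be the CSIM kernel. Define T = √(k₂/(n−1))·I + (1/n)·(√(k₁/n) − √(k₂/(n−1)))·𝟙𝟙ᵀ. Then T is symmetric, T·T = W, and consequently for all x, y ∈ ℝⁿ, CSIM(x,y) = (x−y)ᵀ W (x−y) = ‖T(x−y)‖₂². -/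
/-!
Write `J` for the all-ones matrix, so that `J * J = n • J`. With `a = √(k₂/(n-1))`, `c = √(k₁/n)`
and `b = (c - a)/n`, the matrix `T = a • 1 + b • J` is a polynomial in `J`, and
`T * T = a² • 1 + (2ab + n b²) • J`, where `2ab + n b² = (c² - a²)/n` is the coefficient of `J`
in `W`. Since `T` is symmetric, `vᵀ W v = vᵀ Tᵀ T v = ‖T v‖²`.
-/

open Matrix BigOperators

theorem stmt_3 (n : ℕ) (hn : 2 ≤ n) (k₁ k₂ : ℝ) (hk₁ : 0 < k₁) (hk₂ : 0 < k₂)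
    (W : Matrix (Fin n) (Fin n) ℝ)
    (hW : W = (k₂ / ((n : ℝ) - 1)) • (1 : Matrix (Fin n) (Fin n) ℝ) +
        (k₁ / (n : ℝ) ^ 2 - k₂ / ((n : ℝ) * ((n : ℝ) - 1))) •
          Matrix.of (fun _ _ => (1 : ℝ)))
    (T : Matrix (Fin n) (Fin n) ℝ)
    (hT : T = Real.sqrt (k₂ / ((n : ℝ) - 1)) • (1 : Matrix (Fin n) (Fin n) ℝ) +
        ((1 / (n : ℝ)) * (Real.sqrt (k₁ / (n : ℝ)) - Real.sqrt (k₂ / ((n : ℝ) - 1)))) •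
          Matrix.of (fun _ _ => (1 : ℝ))) :
    Tᵀ = T ∧ T * T = W ∧
      ∀ x y : Fin n → ℝ,
        (x - y) ⬝ᵥ W.mulVec (x - y) = ∑ i, (T.mulVec (x - y) i) ^ 2 := by
  have hn' : (2 : ℝ) ≤ n := by exact_mod_cast hn
  have hn0 : (n : ℝ) ≠ 0 := by linarith
  have hn1 : (n : ℝ) - 1 ≠ 0 := by linarith
  have ha : Real.sqrt (k₂ / ((n : ℝ) - 1)) ^ 2 = k₂ / ((n : ℝ) - 1) :=
    Real.sq_sqrt (div_nonneg hk₂.le (by linarith))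
  have hc : Real.sqrt (k₁ / (n : ℝ)) ^ 2 = k₁ / (n : ℝ) :=
    Real.sq_sqrt (div_nonneg hk₁.le (by linarith))
  generalize Real.sqrt (k₂ / ((n : ℝ) - 1)) = a at *
  generalize Real.sqrt (k₁ / (n : ℝ)) = c at *
  have hJ : (Matrix.of (fun _ _ => (1 : ℝ)) : Matrix (Fin n) (Fin n) ℝ) *
      Matrix.of (fun _ _ => (1 : ℝ)) = (n : ℝ) • Matrix.of (fun _ _ => (1 : ℝ)) := by
    ext i j
    simp [Matrix.mul_apply]
  have hJt : (Matrix.of (fun _ _ => (1 : ℝ)) : Matrix (Fin n) (Fin n) ℝ)ᵀ =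
      Matrix.of (fun _ _ => (1 : ℝ)) := rfl
  have hsymm : Tᵀ = T := by
    rw [hT, transpose_add, transpose_smul, transpose_smul, transpose_one, hJt]
  have hsq : T * T = W := by
    have hcoef : k₁ / (n : ℝ) ^ 2 - k₂ / ((n : ℝ) * ((n : ℝ) - 1)) =
        2 * a * (1 / (n : ℝ) * (c - a)) + (n : ℝ) * (1 / (n : ℝ) * (c - a)) ^ 2 := by
      have h : k₁ / (n : ℝ) ^ 2 - k₂ / ((n : ℝ) * ((n : ℝ) - 1)) =
          (k₁ / (n : ℝ) - k₂ / ((n : ℝ) - 1)) / n := by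
        field_simp
      rw [h, ← ha, ← hc]
      field_simp
      ring
    rw [hT, hW, hcoef, ← ha]
    simp only [add_mul, mul_add, smul_mul_assoc, mul_smul_comm, one_mul, mul_one, hJ]
    module
  refine ⟨hsymm, hsq, fun x y => ?_⟩
  rw [← hsq, ← mulVec_mulVec, dotProduct_mulVec, ← mulVec_transpose, hsymm]
  simp only [dotProduct, sq]
end

section
/- Let n ≥ 2 and 0 < k₁ < k₂, and let W be the CSIM kernel. Then the largest eigenvalue of W is k₂/(n−1), the smallest eigenvalue of W is k₁/n, and the condition number of W satisfies κ(W) = λ_max(W)/λ_min(W) = (k₂/k₁)·(n/(n−1)). -/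
open Matrix BigOperators

/-!
`W = a I + c J` with `J` the all-ones matrix. On an eigenvector `v` with eigenvalue `μ` and
coordinate sum `S`, each coordinate satisfies `a v j + c S = μ v j`; summing over `j` gives
`(a + n c - μ) S = 0`. Hence `μ = a + n c` if `S ≠ 0` and `μ = a` if `S = 0`. Both values occur, on
the all-ones vector and on a difference of two standard basis vectors, so the spectrum is
`{a, a + n c}`. For the CSIM coefficients, `a = k₂ / (n - 1)` and `a + n c = k₁ / n < a`.
-/

lemma smul_one_add_smul_ones_mulVec {n : ℕ} (a c : ℝ) (v : Fin n → ℝ) (j : Fin n) :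
    ((a • (1 : Matrix (Fin n) (Fin n) ℝ) + c • Matrix.of (fun _ _ => (1 : ℝ))) *ᵥ v) j
      = a * v j + c * ∑ i, v i := by
  rw [Matrix.add_mulVec, Matrix.smul_mulVec, Matrix.smul_mulVec, Matrix.one_mulVec]
  simp [Matrix.mulVec, dotProduct]

lemma mem_range_eigenvalues {n : ℕ} {W : Matrix (Fin n) (Fin n) ℝ} (hWh : W.IsHermitian)
    {μ : ℝ} {v : Fin n → ℝ} (hv : v ≠ 0) (h : W *ᵥ v = μ • v) :
    μ ∈ Set.range hWh.eigenvalues := by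
  rw [← hWh.spectrum_real_eq_range_eigenvalues, ← Matrix.spectrum_toLin',
    ← Module.End.hasEigenvalue_iff_mem_spectrum]
  exact Module.End.hasEigenvalue_of_hasEigenvector (x := v)
    ⟨Module.End.mem_eigenspace_iff.2 (by simpa using h), hv⟩

lemma range_eigenvalues_smul_one_add_smul_ones {n : ℕ} (hn : 2 ≤ n) (a c : ℝ)
    {W : Matrix (Fin n) (Fin n) ℝ}
    (hW : W = a • (1 : Matrix (Fin n) (Fin n) ℝ) + c • Matrix.of (fun _ _ => (1 : ℝ)))
    (hWh : W.IsHermitian) :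
    Set.range hWh.eigenvalues = {a, a + n * c} := by
  apply Set.Subset.antisymm
  · rintro _ ⟨i, rfl⟩
    set μ := hWh.eigenvalues i
    set v : Fin n → ℝ := ⇑(hWh.eigenvectorBasis i)
    have hv : v ≠ 0 := by
      intro h0
      apply hWh.eigenvectorBasis.orthonormal.ne_zero i
      ext j
      exact congrFun h0 j
    have hcoord : ∀ j, a * v j + c * ∑ i, v i = μ * v j := by
      intro j
      rw [← smul_one_add_smul_ones_mulVec, ← hW]
      exact congrFun (hWh.mulVec_eigenvectorBasis i) j
    have hsum : (a + n * c - μ) * ∑ i, v i = 0 := by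
      have h := Finset.sum_congr (rfl : (Finset.univ : Finset (Fin n)) = _)
        (fun j _ => hcoord j)
      rw [Finset.sum_add_distrib, ← Finset.mul_sum, ← Finset.mul_sum, ← Finset.mul_sum] at h
      simp only [Finset.sum_const, Finset.card_univ, Fintype.card_fin, nsmul_eq_mul] at h
      linarith
    rcases mul_eq_zero.1 hsum with h | h
    · right
      change μ = _
      linarith
    · left
      obtain ⟨j, hj⟩ := Function.ne_iff.1 hv
      have h' := hcoord j
      rw [h, mul_zero, add_zero] at h'
      exact (mul_right_cancel₀ hj h').symm
  · have h01 : (⟨0, by omega⟩ : Fin n) ≠ ⟨1, by omega⟩ := by simp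
    rintro μ (rfl | rfl)
    · refine mem_range_eigenvalues hWh
        (v := Pi.single ⟨0, by omega⟩ 1 - Pi.single ⟨1, by omega⟩ 1) ?_ ?_
      · intro h
        have := congrFun h ⟨0, by omega⟩
        simp [h01] at this
      · ext j
        rw [hW, smul_one_add_smul_ones_mulVec]
        simp
    · refine mem_range_eigenvalues hWh (v := fun _ => 1) ?_ ?_
      · intro h
        have := congrFun h ⟨0, by omega⟩
        simp at this
      · ext j
        rw [hW, smul_one_add_smul_ones_mulVec]
        simp [mul_comm]

theorem stmt_5 (n : ℕ) (hn : 2 ≤ n) (k₁ k₂ : ℝ) (hk₁ : 0 < k₁) (hk₁₂ : k₁ < k₂)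
    (W : Matrix (Fin n) (Fin n) ℝ)
    (hW : W = (k₂ / ((n : ℝ) - 1)) • (1 : Matrix (Fin n) (Fin n) ℝ) +
        (k₁ / (n : ℝ) ^ 2 - k₂ / ((n : ℝ) * ((n : ℝ) - 1))) •
          Matrix.of (fun _ _ => (1 : ℝ)))
    (hWh : W.IsHermitian) :
    (⨆ i, hWh.eigenvalues i) = k₂ / ((n : ℝ) - 1) ∧
    (⨅ i, hWh.eigenvalues i) = k₁ / (n : ℝ) ∧
    (⨆ i, hWh.eigenvalues i) / (⨅ i, hWh.eigenvalues i) = (k₂ / k₁) * ((n : ℝ) / ((n : ℝ) - 1)) := by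
  have hn' : (2 : ℝ) ≤ n := by exact_mod_cast hn
  have hn0 : (0 : ℝ) < n := by linarith
  have hn1 : (0 : ℝ) < (n : ℝ) - 1 := by linarith
  have hrange := range_eigenvalues_smul_one_add_smul_ones hn _ _ hW hWh
  have hb : k₂ / ((n : ℝ) - 1) +
      n * (k₁ / (n : ℝ) ^ 2 - k₂ / ((n : ℝ) * ((n : ℝ) - 1))) = k₁ / n := by
    field_simp
    ring
  rw [hb] at hrange
  have hle : k₁ / (n : ℝ) ≤ k₂ / ((n : ℝ) - 1) :=
    div_le_div₀ (by linarith) hk₁₂.le hn1 (by linarith)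
  have hsup : (⨆ i, hWh.eigenvalues i) = k₂ / ((n : ℝ) - 1) := by
    rw [iSup, hrange, csSup_pair]
    exact sup_eq_left.2 hle
  have hinf : (⨅ i, hWh.eigenvalues i) = k₁ / (n : ℝ) := by
    rw [iInf, hrange, csInf_pair]
    exact inf_eq_right.2 hle
  refine ⟨hsup, hinf, ?_⟩
  rw [hsup, hinf]
  field_simp
end

section
/- Let D be a real n×p matrix whose columns d₁,…,d_p all have unit Euclidean norm, let μ(D) = max_{i≠j} |dᵢᵀdⱼ| be its mutual coherence, and let δ ∈ (0, √2 − 1). Let k ∈ ℕ, set k₂ = n−1 and let k₁ > 0, and let W be the CSIM kernel. Define C₁ = (1/n²)(2k−1)(n−1)(n−1+μ(D)), C₂ = ((2k−1)/n)(n−1+μ(D)(n+1)), and n_max = (1 + √(1 − 4(δ/(2k−1) − μ(D))(1 − μ(D))))/(2(δ/(2k−1) − μ(D))). Suppose 0 < μ(D) < δ/(2k−1), 1 < k₂/k₁ ≤ C₁/(C₂ − δ), n > n_max, and 2 < 2k ≤ min{1 + δ/μ(D), min{n, p}}. Then D' = W^{1/2}D satisfies the restricted isometry property of order 2k with constant δ: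 for every nonzero s ∈ ℝᵖ with at most 2k nonzero entries, (1−δ)·‖s‖₂² ≤ sᵀ Dᵀ W D s ≤ (1+δ)·‖s‖₂². -/
open Matrix BigOperators

/-!
Since `k₂ = n - 1`, the kernel is `W = 1 - a • u uᵀ` with `u = 𝟙 / √n` and `a = 1 - k₁ / n`, so
`sᵀDᵀWDs = ‖Ds‖² - (a / n) (∑ t, (Ds) t)²`. Put `m = 2k - 1`.

* A Gershgorin-type estimate (`abs_sum_sq_mulVec_sub_le`) gives
  `(1 - mμ)‖s‖² ≤ ‖Ds‖² ≤ (1 + mμ)‖s‖²`, where `mμ < δ`. As `k₁ < k₂ < n`, `a` is positive, and the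
  upper bound follows.
* By Cauchy–Schwarz `sᵀDᵀWDs ≥ (1 - a)‖Ds‖² ≥ (1 - a)(1 - mμ)‖s‖²`. The condition on `k₂ / k₁`
  unfolds to `a (n - 1 + μ) ≤ n (δ / m - μ)`, and `n ≤ m (n - 1)` then yields
  `a (1 - mμ) ≤ δ - mμ`, i.e. `(1 - a)(1 - mμ) ≥ 1 - δ`.
-/

/-- Gershgorin-type bound: for unit columns with pairwise inner products at most `μ`, an
`N`-sparse vector satisfies `|‖Ds‖² - ‖s‖²| ≤ μ (N - 1) ‖s‖²`. -/
lemma abs_sum_sq_mulVec_sub_le {n p : ℕ} (D : Matrix (Fin n) (Fin p) ℝ)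
    (hcols : ∀ j, ∑ i, (D i j) ^ 2 = 1) (μ : ℝ) (hμ0 : 0 ≤ μ)
    (hμ : ∀ i j, i ≠ j → |∑ t, D t i * D t j| ≤ μ) (N : ℕ) (s : Fin p → ℝ)
    (hs : (Finset.univ.filter fun i => s i ≠ 0).card ≤ N) :
    |∑ t, (D *ᵥ s) t ^ 2 - ∑ i, s i ^ 2| ≤ μ * ((N : ℝ) - 1) * ∑ i, s i ^ 2 := by
  have hgram : ∑ t, (D *ᵥ s) t ^ 2 = ∑ i, ∑ j, s i * s j * ∑ t, D t i * D t j := by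
    simp only [Matrix.mulVec, dotProduct, sq, Finset.mul_sum]
    rw [Finset.sum_comm]
    refine Finset.sum_congr rfl fun i _ => ?_
    rw [Finset.sum_comm]
    refine Finset.sum_congr rfl fun t _ => ?_
    rw [Finset.sum_mul]
    refine Finset.sum_congr rfl fun j _ => ?_
    ring
  have hdiag : ∑ i, s i ^ 2 = ∑ i, ∑ j, if i = j then s i ^ 2 else 0 := by simp
  have hl1 : (∑ i, |s i|) ^ 2 ≤ N * ∑ i, s i ^ 2 := by
    have h1 : ∑ i, |s i| = ∑ i ∈ Finset.univ.filter (fun i => s i ≠ 0), |s i| := by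
      rw [Finset.sum_filter]
      refine Finset.sum_congr rfl fun i _ => ?_
      by_cases h : s i = 0 <;> simp [h]
    have h2 : ∑ i ∈ Finset.univ.filter (fun i => s i ≠ 0), |s i| ^ 2 ≤ ∑ i, s i ^ 2 := by
      simp only [sq_abs]
      exact Finset.sum_le_sum_of_subset_of_nonneg (Finset.filter_subset _ _)
        fun i _ _ => sq_nonneg _
    have hs' : ((Finset.univ.filter fun i => s i ≠ 0).card : ℝ) ≤ N := by exact_mod_cast hs
    rw [h1]
    refine sq_sum_le_card_mul_sum_sq.trans (mul_le_mul hs' h2 ?_ (Nat.cast_nonneg _))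
    exact Finset.sum_nonneg fun i _ => sq_nonneg _
  have hoff : |∑ t, (D *ᵥ s) t ^ 2 - ∑ i, s i ^ 2|
      ≤ ∑ i, ∑ j, μ * (|s i| * |s j| - if i = j then s i ^ 2 else 0) := by
    rw [hgram, hdiag, ← Finset.sum_sub_distrib]
    refine (Finset.abs_sum_le_sum_abs _ _).trans (Finset.sum_le_sum fun i _ => ?_)
    rw [← Finset.sum_sub_distrib]
    refine (Finset.abs_sum_le_sum_abs _ _).trans (Finset.sum_le_sum fun j _ => ?_)
    by_cases h : i = j
    · subst h
      have := hcols i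
      simp only [sq] at this
      simp [this, sq]
    · simp only [h, if_false, sub_zero, abs_mul]
      rw [mul_comm μ]
      exact mul_le_mul_of_nonneg_left (hμ i j h) (by positivity)
  have hsum : ∑ i, ∑ j, μ * (|s i| * |s j| - if i = j then s i ^ 2 else 0)
      = μ * ((∑ i, |s i|) ^ 2 - ∑ i, s i ^ 2) := by
    rw [hdiag, sq, Finset.sum_mul_sum]
    simp only [← Finset.mul_sum, Finset.sum_sub_distrib]
  rw [hsum] at hoff
  nlinarith [mul_le_mul_of_nonneg_left hl1 hμ0]

/-- The quadratic form of `Dᵀ (1 + θ 𝟙𝟙ᵀ) D`. -/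
lemma dotProduct_kernel_mulVec {n p : ℕ} (D : Matrix (Fin n) (Fin p) ℝ) (θ : ℝ)
    (s : Fin p → ℝ) :
    s ⬝ᵥ (Dᵀ * ((1 : Matrix (Fin n) (Fin n) ℝ) + θ • Matrix.of (fun _ _ => (1 : ℝ))) * D).mulVec s
      = ∑ t, (D *ᵥ s) t ^ 2 + θ * (∑ t, (D *ᵥ s) t) ^ 2 := by
  rw [← Matrix.mulVec_mulVec, ← Matrix.mulVec_mulVec, Matrix.dotProduct_mulVec,
    Matrix.vecMul_transpose, Matrix.add_mulVec, dotProduct_add, Matrix.one_mulVec,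
    Matrix.smul_mulVec, dotProduct_smul, smul_eq_mul]
  congr 1
  · simp [dotProduct, sq]
  · congr 1
    simp [dotProduct, Matrix.mulVec, sq, Finset.sum_mul]

theorem stmt_10 (n p k : ℕ) (hn : 2 ≤ n)
    (δ : ℝ) (hδ0 : 0 < δ) (hδ1 : δ < Real.sqrt 2 - 1)
    (D : Matrix (Fin n) (Fin p) ℝ)
    (hcols : ∀ j, ∑ i, (D i j) ^ 2 = 1)
    (μD : ℝ)
    (hμD : μD = sSup {r : ℝ | ∃ i j : Fin p, i ≠ j ∧ r = |∑ t, D t i * D t j|})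
    (k₁ k₂ : ℝ) (hk₁ : 0 < k₁) (hk₂ : k₂ = (n : ℝ) - 1)
    (W : Matrix (Fin n) (Fin n) ℝ)
    (hW : W = (k₂ / ((n : ℝ) - 1)) • (1 : Matrix (Fin n) (Fin n) ℝ) +
        (k₁ / (n : ℝ) ^ 2 - k₂ / ((n : ℝ) * ((n : ℝ) - 1))) •
          Matrix.of (fun _ _ => (1 : ℝ)))
    (C₁ C₂ nmax : ℝ)
    (hC₁ : C₁ = (1 / (n : ℝ) ^ 2) * (2 * (k : ℝ) - 1) * ((n : ℝ) - 1) * ((n : ℝ) - 1 + μD))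
    (hC₂ : C₂ = ((2 * (k : ℝ) - 1) / (n : ℝ)) * ((n : ℝ) - 1 + μD * ((n : ℝ) + 1)))
    (hnmax : nmax =
      (1 + Real.sqrt (1 - 4 * (δ / (2 * (k : ℝ) - 1) - μD) * (1 - μD))) /
        (2 * (δ / (2 * (k : ℝ) - 1) - μD)))
    (hμpos : 0 < μD) (hμlt : μD < δ / (2 * (k : ℝ) - 1))
    (hratio₁ : 1 < k₂ / k₁) (hratio₂ : k₂ / k₁ ≤ C₁ / (C₂ - δ))
    (hngt : (n : ℝ) > nmax)
    (hk2 : 2 < 2 * k)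
    (hkμ : (2 * (k : ℝ)) ≤ 1 + δ / μD)
    (hknp : 2 * k ≤ min n p) :
    ∀ s : Fin p → ℝ, s ≠ 0 →
      (Finset.univ.filter fun i => s i ≠ 0).card ≤ 2 * k →
      (1 - δ) * (∑ i, (s i) ^ 2) ≤ s ⬝ᵥ (Dᵀ * W * D).mulVec s ∧
      s ⬝ᵥ (Dᵀ * W * D).mulVec s ≤ (1 + δ) * (∑ i, (s i) ^ 2) := by
  intro s _ hcard
  have hn' : (2 : ℝ) ≤ n := by exact_mod_cast hn
  have hk : (2 : ℝ) ≤ k := by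
    have : 2 ≤ k := by omega
    exact_mod_cast this
  have hcoh : ∀ i j, i ≠ j → |∑ t, D t i * D t j| ≤ μD := by
    intro i j hij
    rw [hμD]
    refine le_csSup (Set.Finite.bddAbove ?_) ⟨i, j, hij, rfl⟩
    refine (Set.finite_range fun q : Fin p × Fin p => |∑ t, D t q.1 * D t q.2|).subset ?_
    rintro r ⟨i, j, -, rfl⟩
    exact ⟨(i, j), rfl⟩
  have hδ : δ < 1 := by
    have : Real.sqrt 2 < 2 := by
      rw [Real.sqrt_lt' (by norm_num)]
      norm_num
    linarith
  obtain ⟨m, hm⟩ : ∃ m : ℝ, m = 2 * (k : ℝ) - 1 := ⟨_, rfl⟩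
  have hm3 : 3 ≤ m := by linarith
  have hgersh := abs_sum_sq_mulVec_sub_le D hcols μD hμpos.le hcoh (2 * k) s hcard
  push_cast at hgersh
  rw [← hm] at hgersh hC₁ hC₂ hμlt
  have hmμ : μD * m < δ := by rwa [lt_div_iff₀ (by linarith)] at hμlt
  obtain ⟨a, ha⟩ : ∃ a : ℝ, a = 1 - k₁ / n := ⟨_, rfl⟩
  have hn1 : (n : ℝ) - 1 ≠ 0 := by
    have : 0 < (n : ℝ) - 1 := by linarith
    exact this.ne'
  have hθ₁ : k₂ / ((n : ℝ) - 1) = 1 := by rw [hk₂, div_self hn1]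
  have hθ : k₁ / (n : ℝ) ^ 2 - k₂ / ((n : ℝ) * ((n : ℝ) - 1)) = -(a / n) := by
    rw [ha, hk₂]
    field_simp
    ring
  rw [hW, hθ₁, one_smul, hθ, dotProduct_kernel_mulVec]
  have hk12 : k₁ < k₂ := by rwa [one_lt_div hk₁] at hratio₁
  have ha0 : 0 ≤ a := by
    rw [ha, sub_nonneg, div_le_one (by linarith)]
    linarith
  have ha1 : a < 1 := by
    have : 0 < k₁ / n := by positivity
    linarith
  have hC₁pos : 0 < C₁ := by
    rw [hC₁]
    have : 0 < (n : ℝ) - 1 := by linarith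
    positivity
  -- `C₂ - δ ≤ 0` would make the upper bound on `k₂ / k₁` nonpositive (or the junk value `0`).
  have hC₂pos : 0 < C₂ - δ := by
    by_contra h
    have := div_nonpos_of_nonneg_of_nonpos hC₁pos.le (not_lt.mp h)
    linarith
  have hakey : a * (m * (n - 1 + μD)) ≤ n * (δ - μD * m) := by
    rw [div_le_div_iff₀ hk₁ hC₂pos, hC₁, hC₂, hk₂] at hratio₂
    have hk₁a : k₁ = n * (1 - a) := by
      rw [ha]
      field_simp
      ring
    rw [hk₁a] at hratio₂
    have e1 : ((n : ℝ) - 1) * (m / n * (n - 1 + μD * (n + 1)) - δ)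
        = ((n - 1) / n) * (m * (n - 1 + μD * (n + 1)) - n * δ) := by
      field_simp
    have e2 : 1 / (n : ℝ) ^ 2 * m * (n - 1) * (n - 1 + μD) * (n * (1 - a))
        = ((n - 1) / n) * (m * (n - 1 + μD) * (1 - a)) := by
      field_simp
    rw [e1, e2] at hratio₂
    have hpos : 0 < ((n : ℝ) - 1) / n := div_pos (by linarith) (by linarith)
    have := le_of_mul_le_mul_left hratio₂ hpos
    nlinarith
  have ham : a * (1 - μD * m) ≤ δ - μD * m := by
    have h1 : n * (1 - μD * m) ≤ m * (n - 1 + μD) := by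
      nlinarith [mul_pos hμpos (by linarith : 0 < m)]
    have h2 := mul_le_mul_of_nonneg_left h1 ha0
    have h3 : (n : ℝ) * (a * (1 - μD * m)) ≤ n * (δ - μD * m) := by linarith
    exact le_of_mul_le_mul_left h3 (by linarith)
  have hcs : (∑ t, (D *ᵥ s) t) ^ 2 ≤ n * ∑ t, (D *ᵥ s) t ^ 2 := by
    simpa using sq_sum_le_card_mul_sum_sq (s := Finset.univ) (f := D *ᵥ s)
  have hS : 0 ≤ ∑ i, s i ^ 2 := Finset.sum_nonneg fun i _ => sq_nonneg _
  have han : 0 ≤ a / n := by positivity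
  obtain ⟨hlo, hhi⟩ := abs_le.mp hgersh
  constructor
  · have h1 : a / n * (∑ t, (D *ᵥ s) t) ^ 2 ≤ a * ∑ t, (D *ᵥ s) t ^ 2 := by
      refine (mul_le_mul_of_nonneg_left hcs han).trans_eq ?_
      field_simp
    have h2 : (1 - a) * ((1 - μD * m) * ∑ i, s i ^ 2) ≤ (1 - a) * ∑ t, (D *ᵥ s) t ^ 2 :=
      mul_le_mul_of_nonneg_left (by linarith) (by linarith)
    have h3 := mul_le_mul_of_nonneg_right ham hS
    linarith
  · have h1 := mul_nonneg han (sq_nonneg (∑ t, (D *ᵥ s) t))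
    have h2 := mul_le_mul_of_nonneg_right hmμ.le hS
    linarith
end

section
/- Let D be a real n×p matrix (n ≥ 2) whose columns d₁,…,d_p have unit Euclidean norm, with mutual coherence μ(D) = max_{i≠j}|dᵢᵀdⱼ|. Let W = θ₁·I + θ₂·𝟙𝟙ᵀ with θ₁ > 0 and θ₂ ≤ 0. For any index set I ⊆ {1,…,p} of size m ≥ 2, let B_I = D_Iᵀ W D_I where D_I is the submatrix of D with columns indexed by I. Then every eigenvalue λ of B_I satisfies λ ≤ θ₁ + (m−1)·(θ₁·μ(D) + |θ₂|·(μ(D) + n − 1)). -/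
open Matrix BigOperators

/-!
The Rayleigh quotient of `B` at `v` is `θ₁ ‖u‖² + θ₂ (𝟙ᵀu)²` with `u = D_I v`. Since `θ₂ ≤ 0`, the
second term can be dropped. Expanding `‖u‖²` through the Gram matrix, whose diagonal is `1` and
whose off-diagonal entries are at most `μ` in absolute value, and applying Cauchy–Schwarz to
`(∑ |vᵢ|)²` gives `‖u‖² ≤ (1 + (m - 1) μ) ‖v‖²` (`gram_quadratic_le`). This proves
`λ ≤ θ₁ (1 + (m - 1) μ)`, and the remaining term `(m - 1) |θ₂| (μ + n - 1)` of the claimed bound is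
nonnegative.
-/

/-- The coherence bound for the norm of a combination of unit columns. -/
lemma gram_quadratic_le {ι κ : Type*} [Fintype ι] [Fintype κ] [DecidableEq ι]
    (A : Matrix κ ι ℝ) (μ : ℝ) (hμ : 0 ≤ μ)
    (hdiag : ∀ i, ∑ t, (A t i) ^ 2 = 1)
    (hoff : ∀ i j, i ≠ j → |∑ t, A t i * A t j| ≤ μ) (v : ι → ℝ) :
    (A *ᵥ v) ⬝ᵥ (A *ᵥ v) ≤ (1 + ((Fintype.card ι : ℝ) - 1) * μ) * ∑ i, v i ^ 2 := by
  have hexp : (A *ᵥ v) ⬝ᵥ (A *ᵥ v) = ∑ i, ∑ j, v i * v j * ∑ t, A t i * A t j := by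
    simp only [dotProduct, mulVec, Finset.sum_mul_sum]
    simp only [Finset.mul_sum]
    rw [Finset.sum_comm]
    refine Finset.sum_congr rfl fun i _ => ?_
    rw [Finset.sum_comm]
    exact Finset.sum_congr rfl fun j _ => Finset.sum_congr rfl fun t _ => by ring
  have hterm : ∀ i j, v i * v j * ∑ t, A t i * A t j
      ≤ μ * (|v i| * |v j|) + if i = j then (1 - μ) * v i ^ 2 else 0 := by
    intro i j
    split_ifs with h
    · subst h
      have h1 : ∑ t, A t i * A t i = 1 := by simpa [pow_two] using hdiag i
      rw [h1, abs_mul_abs_self]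
      exact le_of_eq (by ring)
    · calc v i * v j * ∑ t, A t i * A t j ≤ |v i * v j * ∑ t, A t i * A t j| := le_abs_self _
        _ = |v i| * |v j| * |∑ t, A t i * A t j| := by rw [abs_mul, abs_mul]
        _ ≤ |v i| * |v j| * μ := by gcongr; exact hoff i j h
        _ = _ := by ring
  have hcs : (∑ i, |v i|) ^ 2 ≤ (Fintype.card ι : ℝ) * ∑ i, v i ^ 2 := by
    simpa using sq_sum_le_card_mul_sum_sq (s := Finset.univ) (f := fun i => |v i|)
  calc (A *ᵥ v) ⬝ᵥ (A *ᵥ v)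
      ≤ ∑ i, ∑ j, (μ * (|v i| * |v j|) + if i = j then (1 - μ) * v i ^ 2 else 0) := by
        rw [hexp]
        exact Finset.sum_le_sum fun i _ => Finset.sum_le_sum fun j _ => hterm i j
    _ = μ * (∑ i, |v i|) ^ 2 + (1 - μ) * ∑ i, v i ^ 2 := by
        rw [pow_two, Finset.sum_mul_sum]
        simp [Finset.sum_add_distrib, Finset.mul_sum]
    _ ≤ μ * ((Fintype.card ι : ℝ) * ∑ i, v i ^ 2) + (1 - μ) * ∑ i, v i ^ 2 := by gcongr
    _ = _ := by ring

theorem stmt_11 (n p m : ℕ) (hn : 2 ≤ n)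
    (θ₁ θ₂ : ℝ) (hθ₁ : 0 < θ₁) (hθ₂ : θ₂ ≤ 0)
    (D : Matrix (Fin n) (Fin p) ℝ)
    (hcols : ∀ j, ∑ i, (D i j) ^ 2 = 1)
    (μD : ℝ)
    (hμD : μD = sSup {r : ℝ | ∃ i j : Fin p, i ≠ j ∧ r = |∑ t, D t i * D t j|})
    (W : Matrix (Fin n) (Fin n) ℝ)
    (hW : W = θ₁ • (1 : Matrix (Fin n) (Fin n) ℝ) + θ₂ • Matrix.of (fun _ _ => (1 : ℝ)))
    (I : Finset (Fin p)) (hcard : I.card = m) (hm : 2 ≤ m)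
    (B : Matrix {i // i ∈ I} {i // i ∈ I} ℝ)
    (hB : B = (Matrix.of fun (r : Fin n) (c : {i // i ∈ I}) => D r c.val)ᵀ * W *
        Matrix.of (fun (r : Fin n) (c : {i // i ∈ I}) => D r c.val))
    (lam : ℝ) (v : {i // i ∈ I} → ℝ) (hv : v ≠ 0)
    (heig : B.mulVec v = lam • v) :
    lam ≤ θ₁ + ((m : ℝ) - 1) * (θ₁ * μD + |θ₂| * (μD + (n : ℝ) - 1)) := by
  have hμ0 : 0 ≤ μD := by
    rw [hμD]
    apply Real.sSup_nonneg
    rintro r ⟨i, j, -, rfl⟩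
    exact abs_nonneg _
  have hbdd : BddAbove {r : ℝ | ∃ i j : Fin p, i ≠ j ∧ r = |∑ t, D t i * D t j|} := by
    refine ((Set.finite_range
      fun q : Fin p × Fin p => |∑ t, D t q.1 * D t q.2|).subset ?_).bddAbove
    rintro r ⟨i, j, -, rfl⟩
    exact ⟨(i, j), rfl⟩
  set A : Matrix (Fin n) {i // i ∈ I} ℝ := Matrix.of fun r c => D r c.val with hA
  have hgram := gram_quadratic_le A μD hμ0 (fun i => hcols i.val)
    (fun i j hij => by
      rw [hμD]
      exact le_csSup hbdd ⟨i.val, j.val, fun h => hij (Subtype.ext h), rfl⟩) v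
  have hc : (Fintype.card {i // i ∈ I} : ℝ) = m := by simp [hcard]
  rw [hc] at hgram
  have hray : lam * ∑ i, v i ^ 2
      = θ₁ * ((A *ᵥ v) ⬝ᵥ (A *ᵥ v)) + θ₂ * (∑ t, (A *ᵥ v) t) ^ 2 := by
    have h1 : v ⬝ᵥ (B *ᵥ v) = lam * ∑ i, v i ^ 2 := by
      rw [heig, dotProduct_smul, smul_eq_mul]
      simp [dotProduct, pow_two]
    have h2 : v ⬝ᵥ (B *ᵥ v) = (A *ᵥ v) ⬝ᵥ (W *ᵥ (A *ᵥ v)) := by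
      rw [hB, ← mulVec_mulVec, ← mulVec_mulVec, dotProduct_mulVec, vecMul_transpose]
    have h3 : ∀ u : Fin n → ℝ, u ⬝ᵥ (Matrix.of (fun _ _ : Fin n => (1 : ℝ)) *ᵥ u)
        = (∑ t, u t) ^ 2 := by
      intro u
      simp [dotProduct, mulVec, pow_two, Finset.sum_mul]
    rw [← h1, h2, hW, add_mulVec, smul_mulVec, smul_mulVec, one_mulVec, dotProduct_add,
      dotProduct_smul, dotProduct_smul, h3, smul_eq_mul, smul_eq_mul]
  have hpos : 0 < ∑ i, v i ^ 2 := by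
    obtain ⟨i, hi⟩ := Function.ne_iff.mp hv
    exact Finset.sum_pos' (fun _ _ => sq_nonneg _) ⟨i, Finset.mem_univ _, sq_pos_of_ne_zero hi⟩
  have hle : lam ≤ θ₁ * (1 + ((m : ℝ) - 1) * μD) := by
    refine le_of_mul_le_mul_right ?_ hpos
    have h4 := mul_le_mul_of_nonneg_left hgram hθ₁.le
    have h5 := mul_nonpos_of_nonpos_of_nonneg hθ₂ (sq_nonneg (∑ t, (A *ᵥ v) t))
    linarith
  have hm' : (0 : ℝ) ≤ (m : ℝ) - 1 := by
    have : (2 : ℝ) ≤ m := by exact_mod_cast hm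
    linarith
  have hn' : (0 : ℝ) ≤ μD + (n : ℝ) - 1 := by
    have : (2 : ℝ) ≤ n := by exact_mod_cast hn
    linarith
  have hrest := mul_nonneg hm' (mul_nonneg (abs_nonneg θ₂) hn')
  linarith
end

section
/- Let D be a real n×p matrix (n ≥ 2) whose columns d₁,…,d_p have unit Euclidean norm, with mutual coherence μ(D) = max_{i≠j}|dᵢᵀdⱼ|. Let W = θ₁·I + θ₂·𝟙𝟙ᵀ with θ₁ > 0 and θ₂ ≤ 0. For any index set I ⊆ {1,…,p} of size m ≥ 2, let B_I = D_Iᵀ W D_I. Then every eigenvalue λ of B_I satisfies λ ≥ θ₁ + n·θ₂ − (m−1)·(θ₁·μ(D) + |θ₂|·(μ(D) + n − 1)). -/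
/-!
Gershgorin's circle theorem applied to `B`. With `sᵢ = ∑ₜ D t i`, the entries are
`bᵢⱼ = θ₁ ⟨dᵢ, dⱼ⟩ + θ₂ sᵢ sⱼ`. Cauchy–Schwarz gives `sᵢ² ≤ n`, hence `bᵢᵢ ≥ θ₁ + n θ₂`.
Off the diagonal, `|sᵢ sⱼ| ≤ |⟨dᵢ, dⱼ⟩| + n - 1` (`abs_sum_mul_sum_le`) reflects that `𝟙𝟙ᵀ - I`
has operator norm `n - 1` for `n ≥ 2`; summing over the `m - 1` off-diagonal entries of a row
bounds the Gershgorin radius.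
-/

open Matrix BigOperators

/-- The bound comes from polarization: `4 (∑ x)(∑ y) = (∑ (x + y))² - (∑ (x - y))²`, where
Cauchy–Schwarz bounds each square by `n (2 ± 2 ⟨x, y⟩)`. -/
lemma abs_sum_mul_sum_le {n : ℕ} (hn : 2 ≤ n) (x y : Fin n → ℝ)
    (hx : ∑ t, x t ^ 2 = 1) (hy : ∑ t, y t ^ 2 = 1) :
    |(∑ t, x t) * (∑ t, y t)| ≤ |∑ t, x t * y t| + (n : ℝ) - 1 := by
  have hn' : (2 : ℝ) ≤ n := by exact_mod_cast hn
  set c := ∑ t, x t * y t with hc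
  have e1 : ∑ t, (x t + y t) ^ 2 = 2 + 2 * c := by
    have : ∀ t, (x t + y t) ^ 2 = x t ^ 2 + y t ^ 2 + 2 * (x t * y t) := fun t => by ring
    simp only [this, Finset.sum_add_distrib, ← Finset.mul_sum, hx, hy, ← hc]
    ring
  have e2 : ∑ t, (x t - y t) ^ 2 = 2 - 2 * c := by
    have : ∀ t, (x t - y t) ^ 2 = x t ^ 2 + y t ^ 2 - 2 * (x t * y t) := fun t => by ring
    simp only [this, Finset.sum_add_distrib, Finset.sum_sub_distrib, ← Finset.mul_sum, hx, hy,
      ← hc]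
    ring
  have p1 : 0 ≤ ∑ t, (x t + y t) ^ 2 := Finset.sum_nonneg fun t _ => sq_nonneg _
  have p2 : 0 ≤ ∑ t, (x t - y t) ^ 2 := Finset.sum_nonneg fun t _ => sq_nonneg _
  have c1 := sq_sum_le_card_mul_sum_sq (s := Finset.univ) (f := fun t => x t + y t)
  have c2 := sq_sum_le_card_mul_sum_sq (s := Finset.univ) (f := fun t => x t - y t)
  rw [e1] at p1 c1
  rw [e2] at p2 c2
  simp only [Finset.sum_add_distrib, Finset.sum_sub_distrib, Finset.card_univ,
    Fintype.card_fin] at c1 c2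
  have a1 := le_abs_self c
  have a2 := neg_abs_le c
  rw [abs_le]
  constructor
  · nlinarith [mul_nonneg (sub_nonneg.2 hn') p1, sq_nonneg (∑ t, x t + ∑ t, y t)]
  · nlinarith [mul_nonneg (sub_nonneg.2 hn') p2, sq_nonneg (∑ t, x t - ∑ t, y t)]

theorem stmt_12 (n p m : ℕ) (hn : 2 ≤ n)
    (θ₁ θ₂ : ℝ) (hθ₁ : 0 < θ₁) (hθ₂ : θ₂ ≤ 0)
    (D : Matrix (Fin n) (Fin p) ℝ)
    (hcols : ∀ j, ∑ i, (D i j) ^ 2 = 1)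
    (μD : ℝ)
    (hμD : μD = sSup {r : ℝ | ∃ i j : Fin p, i ≠ j ∧ r = |∑ t, D t i * D t j|})
    (W : Matrix (Fin n) (Fin n) ℝ)
    (hW : W = θ₁ • (1 : Matrix (Fin n) (Fin n) ℝ) + θ₂ • Matrix.of (fun _ _ => (1 : ℝ)))
    (I : Finset (Fin p)) (hcard : I.card = m) (hm : 2 ≤ m)
    (B : Matrix {i // i ∈ I} {i // i ∈ I} ℝ)
    (hB : B = (Matrix.of fun (r : Fin n) (c : {i // i ∈ I}) => D r c.val)ᵀ * W *
        Matrix.of (fun (r : Fin n) (c : {i // i ∈ I}) => D r c.val))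
    (lam : ℝ) (v : {i // i ∈ I} → ℝ) (hv : v ≠ 0)
    (heig : B.mulVec v = lam • v) :
    θ₁ + (n : ℝ) * θ₂ - ((m : ℝ) - 1) * (θ₁ * μD + |θ₂| * (μD + (n : ℝ) - 1)) ≤ lam := by
  have hent : ∀ i j, B i j = θ₁ * (∑ t, D t i.val * D t j.val)
      + θ₂ * ((∑ t, D t i.val) * (∑ t, D t j.val)) := by
    intro i j
    rw [hB, hW, Matrix.mul_add, Matrix.add_mul, Matrix.add_apply]
    congr 1
    · simp [Matrix.mul_apply, Finset.mul_sum, mul_assoc]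
    · simp [Matrix.mul_apply, ← Finset.sum_mul, ← Finset.mul_sum]
      ring
  have hμ : ∀ i j : Fin p, i ≠ j → |∑ t, D t i * D t j| ≤ μD := by
    intro i j hij
    rw [hμD]
    refine le_csSup ?_ ⟨i, j, hij, rfl⟩
    refine ((Set.finite_range fun q : Fin p × Fin p => |∑ t, D t q.1 * D t q.2|).subset
      ?_).bddAbove
    rintro r ⟨i, j, -, rfl⟩
    exact ⟨(i, j), rfl⟩
  have hE : Module.End.HasEigenvalue (Matrix.toLin' B) lam :=
    Module.End.hasEigenvalue_of_hasEigenvector (x := v)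
      ⟨Module.End.mem_eigenspace_iff.2 (by simpa using heig), hv⟩
  obtain ⟨k, hk⟩ := eigenvalue_mem_ball hE
  have hdiag : θ₁ + (n : ℝ) * θ₂ ≤ B k k := by
    have h1 : ∑ t, D t k.val * D t k.val = 1 := by
      simpa only [sq] using hcols k.val
    have h2 := sq_sum_le_card_mul_sum_sq (s := Finset.univ) (f := fun t => D t k.val)
    rw [hcols, Finset.card_univ, Fintype.card_fin] at h2
    rw [hent, h1]
    nlinarith
  have hoff : ∀ j ∈ Finset.univ.erase k,
      ‖B k j‖ ≤ θ₁ * μD + |θ₂| * (μD + (n : ℝ) - 1) := by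
    intro j hj
    have hne : k.val ≠ j.val := fun h => Finset.ne_of_mem_erase hj (Subtype.ext h.symm)
    have h1 := hμ _ _ hne
    have h2 := abs_sum_mul_sum_le hn (fun t => D t k.val) (fun t => D t j.val)
      (hcols _) (hcols _)
    rw [hent, Real.norm_eq_abs]
    refine (abs_add_le _ _).trans ?_
    rw [abs_mul, abs_mul θ₂, abs_of_pos hθ₁]
    gcongr
    linarith
  have hsum := Finset.sum_le_card_nsmul _ _ _ hoff
  have hc : ((Finset.univ.erase k).card : ℝ) = (m : ℝ) - 1 := by
    rw [Finset.card_erase_of_mem (Finset.mem_univ k), Finset.card_univ, Fintype.card_coe, hcard,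
      Nat.cast_sub (by omega), Nat.cast_one]
  rw [nsmul_eq_mul, hc] at hsum
  rw [Metric.mem_closedBall, Real.dist_eq] at hk
  linarith [neg_abs_le (lam - B k k)]
end

section
/- Let m ≥ 1, let C be a real m×m symmetric positive-definite matrix, let c ∈ ℝᵐ, let k₁, k₂ > 0, let μ and σ_x² be real numbers, and let 𝟙 ∈ ℝᵐ be the all-ones vector. Then the function f(h) = k₁·(μ − μ·𝟙ᵀh)² + k₂·(σ_x² + hᵀCh − 2hᵀc) has a unique global minimizer over ℝᵐ, given by h* = (C + (k₁/k₂)·μ²·𝟙𝟙ᵀ)⁻¹·(c + (k₁/k₂)·μ²·𝟙); in particular the matrix C + (k₁/k₂)·μ²·𝟙𝟙ᵀ is invertible. -/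
/-!
Write `t = (k₁ / k₂) μ²` and `A = C + t 𝟙𝟙ᵀ`, which is positive definite, hence invertible.
The point `hstar` solves the normal equation `A hstar = c + t 𝟙`, so the linear term in the
expansion of `f` around `hstar` vanishes and
`f (hstar + d) - f hstar = k₂ dᵀ C d + k₁ μ² (𝟙ᵀ d)²`,
which is positive for `d ≠ 0`.
-/

open Matrix BigOperators

theorem stmt_17 (m : ℕ) (hm : 1 ≤ m)
    (C : Matrix (Fin m) (Fin m) ℝ) (hC : C.PosDef)
    (c : Fin m → ℝ) (k₁ k₂ : ℝ) (hk₁ : 0 < k₁) (hk₂ : 0 < k₂)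
    (μ σx2 : ℝ)
    (f : (Fin m → ℝ) → ℝ)
    (hf : f = fun h => k₁ * (μ - μ * ∑ i, h i) ^ 2 +
        k₂ * (σx2 + h ⬝ᵥ C.mulVec h - 2 * (h ⬝ᵥ c)))
    (A : Matrix (Fin m) (Fin m) ℝ)
    (hA : A = C + ((k₁ / k₂) * μ ^ 2) • Matrix.of (fun _ _ => (1 : ℝ)))
    (hstar : Fin m → ℝ)
    (hstardef : hstar = A⁻¹.mulVec (c + fun _ => (k₁ / k₂) * μ ^ 2)) :
    IsUnit A ∧ ∀ h : Fin m → ℝ, h ≠ hstar → f hstar < f h := by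
  have ht : 0 ≤ k₁ / k₂ * μ ^ 2 := by positivity
  have htk : k₂ * (k₁ / k₂ * μ ^ 2) = k₁ * μ ^ 2 := by field_simp
  generalize k₁ / k₂ * μ ^ 2 = t at *
  have hones : (Matrix.of (fun _ _ => (1 : ℝ)) : Matrix (Fin m) (Fin m) ℝ).PosSemidef := by
    have h := Matrix.posSemidef_vecMulVec_self_star (fun _ : Fin m => (1 : ℝ))
    convert h using 1
    ext i j
    simp [Matrix.vecMulVec]
  have hApos : A.PosDef := by
    rw [hA]
    exact hC.add_posSemidef (hones.smul ht)
  have hU : IsUnit A := hApos.isUnit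
  refine ⟨hU, fun h hne => ?_⟩
  have hnormal : A.mulVec hstar = c + fun _ => t := by
    rw [hstardef, Matrix.mulVec_mulVec,
      Matrix.mul_nonsing_inv _ ((Matrix.isUnit_iff_isUnit_det A).mp hU), Matrix.one_mulVec]
  obtain ⟨d, rfl⟩ : ∃ d, h = hstar + d := ⟨h - hstar, by abel⟩
  have hd : d ≠ 0 := by
    rintro rfl
    simp at hne
  have hpos : 0 < d ⬝ᵥ C.mulVec d := by
    simpa using hC.dotProduct_mulVec_pos hd
  have hsymm : hstar ⬝ᵥ C.mulVec d = d ⬝ᵥ C.mulVec hstar := by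
    have hT : Cᵀ = C := by simpa [Matrix.IsHermitian] using hC.isHermitian
    rw [Matrix.dotProduct_mulVec, ← Matrix.mulVec_transpose, hT, dotProduct_comm]
  -- the normal equation tested against the direction `d`
  have hlin : d ⬝ᵥ C.mulVec hstar + t * ((∑ i, d i) * ∑ i, hstar i)
      = d ⬝ᵥ c + t * ∑ i, d i := by
    have hJ : (Matrix.of (fun _ _ => (1 : ℝ)) : Matrix (Fin m) (Fin m) ℝ).mulVec hstar
        = fun _ => ∑ i, hstar i := by
      ext i
      simp [Matrix.mulVec, dotProduct]
    have hconst : ∀ a : ℝ, d ⬝ᵥ (fun _ => a) = (∑ i, d i) * a := by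
      intro a
      simp [dotProduct, Finset.sum_mul]
    have h := congrArg (fun v => d ⬝ᵥ v) hnormal
    simp only [hA, Matrix.add_mulVec, Matrix.smul_mulVec, hJ, dotProduct_add, dotProduct_smul,
      hconst, smul_eq_mul] at h
    linarith
  have key : f (hstar + d) - f hstar
      = k₂ * (d ⬝ᵥ C.mulVec d) + k₁ * (μ * ∑ i, d i) ^ 2 := by
    simp only [hf, Matrix.mulVec_add, dotProduct_add, add_dotProduct, Pi.add_apply,
      Finset.sum_add_distrib, hsymm]
    linear_combination 2 * k₂ * hlin
      + 2 * ((∑ i, d i) - (∑ i, d i) * ∑ i, hstar i) * htk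
  have h1 : 0 < k₂ * (d ⬝ᵥ C.mulVec d) := mul_pos hk₂ hpos
  have h2 : 0 ≤ k₁ * (μ * ∑ i, d i) ^ 2 := by positivity
  linarith
end
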